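/- arXiv:2512.14378 — 5 statements merged into one kernel-verified Lean document; each statement's English description precedes it below -/
import Mathlib

section
/- Let n ≥ 8 be divisible by 4 and let H be a saturated orthogonal array OA(n,n−1,2,2). Then the sum of J₃(S)² over all unordered 3-subsets S of the n−1 columns of H equals n²(n−1)(n−2)/6. -/
open Finset

lemma esum_insert {α : Type*} [DecidableEq α] (x : α → ℤ) (a : α) (s : Finset α) (ha : a ∉ s)
    (k : ℕ) : ∑ S ∈ (insert a s).powersetCard (k+1), ∏ j ∈ S, x j
      = ∑ S ∈ s.powersetCard (k+1), ∏ j ∈ S, x j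
        + x a * ∑ S ∈ s.powersetCard k, ∏ j ∈ S, x j := by
  have hm : ∀ S ∈ s.powersetCard k, a ∉ S := fun S hS h =>
    ha ((Finset.mem_powersetCard.1 hS).1 h)
  rw [Finset.powersetCard_succ_insert ha, Finset.sum_union, Finset.sum_image, Finset.mul_sum]
  · congr 1
    refine Finset.sum_congr rfl fun S hS => ?_
    rw [Finset.prod_insert (hm S hS)]
  · intro S hS T hT h
    have := congrArg (fun U => Finset.erase U a) h
    simpa [Finset.erase_insert (hm S hS), Finset.erase_insert (hm T hT)] using this
  · rw [Finset.disjoint_left]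
    intro S hS hS'
    obtain ⟨T, hT, rfl⟩ := Finset.mem_image.1 hS'
    exact ha ((Finset.mem_powersetCard.1 hS).1 (Finset.mem_insert_self _ _))

lemma newton3 {α : Type*} [DecidableEq α] (x : α → ℤ) (s : Finset α) :
    (∑ S ∈ s.powersetCard 1, ∏ j ∈ S, x j = ∑ j ∈ s, x j) ∧
    (2 * ∑ S ∈ s.powersetCard 2, ∏ j ∈ S, x j = (∑ j ∈ s, x j)^2 - ∑ j ∈ s, x j ^ 2) ∧
    (6 * ∑ S ∈ s.powersetCard 3, ∏ j ∈ S, x j = (∑ j ∈ s, x j)^3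
      - 3 * (∑ j ∈ s, x j) * (∑ j ∈ s, x j ^ 2) + 2 * ∑ j ∈ s, x j ^ 3) := by
  induction s using Finset.induction_on with
  | empty =>
    have : ∀ k, (∅ : Finset α).powersetCard (k+1) = ∅ := fun k =>
      Finset.powersetCard_eq_empty.2 (by simp)
    simp [this 0, this 1, this 2]
  | insert a s ha ih =>
    obtain ⟨h1, h2, h3⟩ := ih
    have e1 := esum_insert x a s ha 0
    have e2 := esum_insert x a s ha 1
    have e3 := esum_insert x a s ha 2
    simp only [Finset.powersetCard_zero, Finset.sum_singleton, Finset.prod_empty] at e1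
    norm_num at e1 e2 e3
    rw [e1, e2, e3]
    simp only [Finset.sum_insert ha]
    refine ⟨?_, ?_, ?_⟩
    · linear_combination h1
    · linear_combination h2 + 2 * x a * h1
    · linear_combination h3 + 3 * x a * h2

lemma rows_orth (n : ℕ) (hn : 8 ≤ n)
    (H : Fin n → Fin (n - 1) → ℤ)
    (hpm : ∀ i j, H i j = 1 ∨ H i j = -1)
    (hbal : ∀ j, ∑ i : Fin n, H i j = 0)
    (horth : ∀ j k : Fin (n - 1), j ≠ k → ∑ i : Fin n, H i j * H i k = 0)
    (i i' : Fin n) (hi : i ≠ i') : ∑ j, H i j * H i' j = -1 := by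
  have hsq : ∀ i j, H i j * H i j = 1 := fun i j => by
    rcases hpm i j with h | h <;> simp [h]
  have hn0 : (n : ℚ) ≠ 0 := by positivity
  obtain ⟨M, hM0, hM1⟩ : ∃ M : Matrix (Fin n) (Option (Fin (n-1))) ℚ,
      (∀ i, M i none = 1) ∧ (∀ i j, M i (some j) = (H i j : ℚ)) :=
    ⟨Matrix.of fun i o => o.elim 1 (fun j => (H i j : ℚ)), fun _ => rfl, fun _ _ => rfl⟩
  have h1 : ((n:ℚ)⁻¹ • M.transpose) * M = 1 := by
    rw [Matrix.smul_mul]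
    ext o o'
    rw [Matrix.smul_apply, Matrix.mul_apply]
    rcases o with _ | j <;> rcases o' with _ | k
    · simp [hM0, hn0]
    · have := hbal k
      simp only [Matrix.transpose_apply, hM0, hM1, one_mul]
      rw [Matrix.one_apply_ne (by simp)]
      rw [show ∑ i, (H i k : ℚ) = 0 by exact_mod_cast this]; simp
    · have := hbal j
      simp only [Matrix.transpose_apply, hM0, hM1, mul_one]
      rw [Matrix.one_apply_ne (by simp)]
      rw [show ∑ i, (H i j : ℚ) = 0 by exact_mod_cast this]; simp
    · simp only [Matrix.transpose_apply, hM0, hM1]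
      by_cases hjk : j = k
      · subst hjk
        have : ∀ i, (H i j : ℚ) * H i j = 1 := fun i => by exact_mod_cast hsq i j
        simp [this, hn0]
      · rw [Matrix.one_apply_ne (by simpa using hjk)]
        rw [show ∑ i, (H i j : ℚ) * H i k = 0 by exact_mod_cast horth j k hjk]; simp
  have h2 : M * ((n:ℚ)⁻¹ • M.transpose) = 1 := by
    rwa [Matrix.mul_eq_one_comm_of_card_eq]
    simp; omega
  have h3 := congrFun (congrFun h2 i) i'
  rw [Matrix.mul_smul, Matrix.smul_apply, Matrix.mul_apply, Matrix.one_apply_ne hi,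
    Fintype.sum_option] at h3
  simp only [Matrix.transpose_apply, hM0, hM1, smul_eq_mul, mul_eq_zero, inv_eq_zero,
    hn0, false_or, mul_one] at h3
  have h4 : 1 + ∑ j, H i j * H i' j = 0 := by exact_mod_cast h3
  linarith

/-- For a saturated orthogonal array `OA(n, n-1, 2, 2)` (entries `±1`,
balanced columns, pairwise orthogonal columns), the sum of `J₃(S)²` over all
unordered 3-subsets `S` of the `n-1` columns equals `n²(n-1)(n-2)/6`. -/
theorem sum_J3_sq_saturated (n : ℕ) (hn : 8 ≤ n) (h4 : 4 ∣ n)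
    (H : Fin n → Fin (n - 1) → ℤ)
    (hpm : ∀ i j, H i j = 1 ∨ H i j = -1)
    (hbal : ∀ j, ∑ i : Fin n, H i j = 0)
    (horth : ∀ j k : Fin (n - 1), j ≠ k → ∑ i : Fin n, H i j * H i k = 0) :
    ∑ S ∈ (Finset.univ : Finset (Fin (n - 1))).powersetCard 3,
        (∑ i : Fin n, ∏ j ∈ S, H i j) ^ 2
      = (n : ℤ) ^ 2 * ((n : ℤ) - 1) * ((n : ℤ) - 2) / 6 := by
  have hsq : ∀ i j, H i j ^ 2 = 1 := fun i j => by
    rcases hpm i j with h | h <;> simp [h]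
  have hc : ((n - 1 : ℕ) : ℤ) = n - 1 := by omega
  have key : ∀ i i' : Fin n,
      6 * ∑ S ∈ (Finset.univ : Finset (Fin (n - 1))).powersetCard 3, ∏ j ∈ S, (H i j * H i' j)
      = 3 * ((n:ℤ) - 2) + if i = i' then ((n:ℤ)-1)*(n-2)*(n-3) - 3 * (n - 2) else 0 := by
    intro i i'
    rw [(newton3 (fun j => H i j * H i' j) Finset.univ).2.2]
    have p2 : ∀ j, (H i j * H i' j)^2 = 1 := fun j => by rw [mul_pow, hsq, hsq, one_mul]
    have p3 : ∀ j, (H i j * H i' j)^3 = H i j * H i' j := fun j => by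
      rw [pow_succ, p2, one_mul]
    simp only [p2, p3, Finset.sum_const, Finset.card_univ, Fintype.card_fin, nsmul_eq_mul, mul_one,
      hc]
    split_ifs with h
    · subst h
      have : ∑ j, H i j * H i j = (n:ℤ) - 1 := by
        simp [← pow_two, hsq, hc]
      rw [this]; ring
    · rw [rows_orth n hn H hpm hbal horth i i' h]; ring
  have h6 : 6 * ∑ S ∈ (Finset.univ : Finset (Fin (n - 1))).powersetCard 3,
        (∑ i : Fin n, ∏ j ∈ S, H i j) ^ 2
      = (n : ℤ) ^ 2 * ((n : ℤ) - 1) * ((n : ℤ) - 2) := by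
    have : ∑ S ∈ (Finset.univ : Finset (Fin (n - 1))).powersetCard 3,
        (∑ i : Fin n, ∏ j ∈ S, H i j) ^ 2 = ∑ i, ∑ i',
        ∑ S ∈ (Finset.univ : Finset (Fin (n - 1))).powersetCard 3,
          ∏ j ∈ S, (H i j * H i' j) := by
      simp only [pow_two, Finset.sum_mul_sum, ← Finset.prod_mul_distrib]
      rw [Finset.sum_comm]
      exact Finset.sum_congr rfl fun i _ => Finset.sum_comm
    rw [this]
    simp only [Finset.mul_sum (s := (Finset.univ : Finset (Fin n))), key]
    simp only [Finset.sum_add_distrib, Finset.sum_ite_eq, Finset.mem_univ, if_true,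
      Finset.sum_const, Finset.card_univ, Fintype.card_fin, nsmul_eq_mul]
    ring
  rw [← h6]
  exact (Int.mul_ediv_cancel_left _ (by norm_num)).symm
end

section
/- Let n ≥ 8 be divisible by 4, let H be a saturated orthogonal array OA(n,n−1,2,2), and let two distinct fixed columns of H be removed. Then the sum of J₃(S)² over all unordered 3-subsets S of the remaining n−3 columns equals n²(n−4)(n−5)/6. -/
open Finset

theorem aux_e3 {ι : Type*} [DecidableEq ι] (x : ι → ℤ) (hx : ∀ j, x j ^ 2 = 1) (T : Finset ι) :
    2 * ∑ S ∈ T.powersetCard 2, ∏ j ∈ S, x j = (∑ j ∈ T, x j) ^ 2 - T.card ∧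
    6 * ∑ S ∈ T.powersetCard 3, ∏ j ∈ S, x j
      = (∑ j ∈ T, x j) ^ 3 - (3 * T.card - 2) * ∑ j ∈ T, x j := by
  have key : ∀ (k : ℕ) (a : ι) (s : Finset ι), a ∉ s →
      ∑ S ∈ (insert a s).powersetCard (k + 1), ∏ j ∈ S, x j
      = ∑ S ∈ s.powersetCard (k + 1), ∏ j ∈ S, x j
        + x a * ∑ S ∈ s.powersetCard k, ∏ j ∈ S, x j := by
    intro k a s ha
    rw [Finset.powersetCard_succ_insert ha, Finset.sum_union, Finset.sum_image, Finset.mul_sum]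
    · congr 1
      refine Finset.sum_congr rfl fun S hS => ?_
      rw [Finset.prod_insert]
      exact fun h => ha ((Finset.mem_powersetCard.1 hS).1 h)
    · intro S hS S' hS' h
      have h1 : a ∉ S := fun h => ha ((Finset.mem_powersetCard.1 hS).1 h)
      have h2 : a ∉ S' := fun h => ha ((Finset.mem_powersetCard.1 hS').1 h)
      have := congrArg (fun U => U.erase a) h
      simpa [h1, h2] using this
    · rw [Finset.disjoint_left]
      intro S hS hS'
      obtain ⟨U, _, rfl⟩ := Finset.mem_image.1 hS'
      exact ha ((Finset.mem_powersetCard.1 hS).1 (Finset.mem_insert_self _ _))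
  induction T using Finset.induction_on with
  | empty =>
    have h2 : (∅ : Finset ι).powersetCard 2 = ∅ := Finset.powersetCard_eq_empty.2 (by simp)
    have h3 : (∅ : Finset ι).powersetCard 3 = ∅ := Finset.powersetCard_eq_empty.2 (by simp)
    constructor <;> simp [h2, h3]
  | insert a s ha ih =>
    have h1 : ∑ S ∈ s.powersetCard 1, ∏ j ∈ S, x j = ∑ j ∈ s, x j := by
      simp [Finset.powersetCard_one]
    obtain ⟨i2, i3⟩ := ih
    rw [key 1 a s ha, key 2 a s ha, Finset.sum_insert ha, Finset.card_insert_of_notMem ha, h1]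
    have ha2 := hx a
    push_cast
    constructor
    · linear_combination i2 - ha2
    · linear_combination i3 + 3 * x a * i2 - (3 * (∑ j ∈ s, x j) + x a) * ha2

theorem aux_row (n : ℕ) (hn : 8 ≤ n)
    (H : Fin n → Fin (n - 1) → ℤ)
    (hpm : ∀ i j, H i j = 1 ∨ H i j = -1)
    (hbal : ∀ j, ∑ i : Fin n, H i j = 0)
    (horth : ∀ j k : Fin (n - 1), j ≠ k → ∑ i : Fin n, H i j * H i k = 0) (i k : Fin n) :
    1 + ∑ j, H i j * H k j = if i = k then (n : ℤ) else 0 := by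
  let M : Matrix (Fin n) (Option (Fin (n - 1))) ℚ :=
    Matrix.of fun i o => o.elim 1 (fun j => (H i j : ℚ))
  let N : Matrix (Option (Fin (n - 1))) (Fin n) ℚ :=
    Matrix.of fun o i => (n : ℚ)⁻¹ * M i o
  have hn0 : (n : ℚ) ≠ 0 := by positivity
  have hsq : ∀ i j, (H i j : ℚ) * H i j = 1 := by
    intro i j; rcases hpm i j with h | h <;> simp [h]
  have hb : ∀ j, ∑ i : Fin n, (H i j : ℚ) = 0 := fun j => by exact_mod_cast hbal j
  have ho : ∀ j k : Fin (n - 1), j ≠ k → ∑ i : Fin n, (H i j : ℚ) * H i k = 0 :=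
    fun j k h => by exact_mod_cast horth j k h
  have h1 : N * M = 1 := by
    ext o p
    simp only [Matrix.mul_apply, Matrix.of_apply, N, M, mul_assoc, ← Finset.mul_sum]
    cases o with
    | none =>
      cases p with
      | none => simp [hn0]
      | some p => simp [hb]
    | some o =>
      cases p with
      | none => simp [hb]
      | some p =>
        by_cases h : o = p
        · subst h; simp [hsq, hn0]
        · simp [ho o p h, Matrix.one_apply, h]
  have e : Option (Fin (n - 1)) ≃ Fin n := Fintype.equivOfCardEq (by simp; omega)
  have h2 : M * N = 1 := (Matrix.mul_eq_one_comm_of_equiv e).1 h1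
  have h3 := congrFun (congrFun h2 i) k
  simp only [Matrix.mul_apply, Matrix.of_apply, N, M, mul_left_comm _ ((n : ℚ)⁻¹), ← Finset.mul_sum,
    Fintype.sum_option, Option.elim, Matrix.one_apply] at h3
  rw [inv_mul_eq_iff_eq_mul₀ hn0] at h3
  have : (1 : ℚ) + ∑ j, (H i j : ℚ) * H k j = if i = k then (n : ℚ) else 0 := by
    simpa using h3
  exact_mod_cast this

/-- Deleting two distinct fixed columns from a saturated `OA(n, n-1, 2, 2)`,
the sum of `J₃(S)²` over all unordered 3-subsets of the remaining `n-3` columns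
equals `n²(n-4)(n-5)/6`. -/
theorem sum_J3_sq_delete_two (n : ℕ) (hn : 8 ≤ n) (h4 : 4 ∣ n)
    (H : Fin n → Fin (n - 1) → ℤ)
    (hpm : ∀ i j, H i j = 1 ∨ H i j = -1)
    (hbal : ∀ j, ∑ i : Fin n, H i j = 0)
    (horth : ∀ j k : Fin (n - 1), j ≠ k → ∑ i : Fin n, H i j * H i k = 0)
    (a b : Fin (n - 1)) (hab : a ≠ b) :
    ∑ S ∈ ((Finset.univ : Finset (Fin (n - 1))) \ {a, b}).powersetCard 3,
        (∑ i : Fin n, ∏ j ∈ S, H i j) ^ 2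
      = (n : ℤ) ^ 2 * ((n : ℤ) - 4) * ((n : ℤ) - 5) / 6 := by
  symm
  apply Int.ediv_eq_of_eq_mul_right (by norm_num)
  have hsq : ∀ i j, H i j ^ 2 = 1 := by
    intro i j; rcases hpm i j with h | h <;> simp [h]
  set T := (Finset.univ : Finset (Fin (n - 1))) \ {a, b} with hT
  have hc : (T.card : ℤ) = n - 3 := by
    have h := Finset.card_sdiff_add_card_eq_card (Finset.subset_univ ({a, b} : Finset (Fin (n - 1))))
    rw [Finset.card_pair hab, Finset.card_univ, Fintype.card_fin, ← hT] at h
    omega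
  have hswap : ∑ S ∈ T.powersetCard 3, (∑ i : Fin n, ∏ j ∈ S, H i j) ^ 2
      = ∑ i : Fin n, ∑ k : Fin n, ∑ S ∈ T.powersetCard 3, ∏ j ∈ S, (H i j * H k j) := by
    simp_rw [sq, Finset.sum_mul_sum, Finset.prod_mul_distrib]
    rw [Finset.sum_comm]
    refine Finset.sum_congr rfl fun i _ => ?_
    rw [Finset.sum_comm]
  have hterm : ∀ i k : Fin n, 6 * ∑ S ∈ T.powersetCard 3, ∏ j ∈ S, (H i j * H k j)
      = (3 * (n : ℤ) - 18) + (if i = k then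
          ((n : ℤ) - 3) ^ 3 - (3 * n - 11) * (n - 3) - (-27 + (3 * n - 11) * 3) else 0)
        + (3 * n - 18) * (H i a * H k a) + (3 * n - 18) * (H i b * H k b)
        - 6 * ((H i a * H i b) * (H k a * H k b)) := by
    intro i k
    have hx : ∀ j, (H i j * H k j) ^ 2 = 1 := fun j => by rw [mul_pow, hsq, hsq, one_mul]
    rw [(aux_e3 (fun j => H i j * H k j) hx T).2, hc]
    have hp : ∑ j ∈ T, H i j * H k j
        = (if i = k then (n : ℤ) else 0) - 1 - H i a * H k a - H i b * H k b := by
      have h := Finset.sum_sdiff (f := fun j => H i j * H k j)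
        (Finset.subset_univ ({a, b} : Finset (Fin (n - 1))))
      rw [Finset.sum_pair hab, ← hT] at h
      have := aux_row n hn H hpm hbal horth i k
      linarith
    rw [hp]
    by_cases h : i = k
    · subst h
      have h1 : H i a * H i a = 1 := by rw [← sq, hsq]
      have h2 : H i b * H i b = 1 := by rw [← sq, hsq]
      have h3 : H i a * H i b * (H i a * H i b) = 1 := by rw [← sq, mul_pow, hsq, hsq, one_mul]
      simp only [if_true, h1, h2, h3]
      ring
    · simp only [h, if_false]
      rcases hpm i a with h1 | h1 <;> rcases hpm i b with h2 | h2 <;>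
      rcases hpm k a with h3 | h3 <;> rcases hpm k b with h4 | h4 <;>
      rw [h1, h2, h3, h4] <;> ring
  rw [hswap]
  simp_rw [Finset.mul_sum (s := (Finset.univ : Finset (Fin n))), hterm]
  simp only [Finset.sum_add_distrib, Finset.sum_sub_distrib, ← Finset.mul_sum, ← Finset.sum_mul,
    hbal, horth a b hab, Finset.sum_ite_eq, Finset.mem_univ, if_true, Finset.sum_const,
    Finset.card_univ, Fintype.card_fin, nsmul_eq_mul]
  ring
end

section
/- Let n ≥ 8 be divisible by 4, let H be a saturated orthogonal array OA(n,n−1,2,2), and let c_{i₀} be a fixed column of H. Then the sum of J₃(c_{i₀},c_j,c_k)² over all unordered pairs {c_j,c_k} of distinct columns of H different from c_{i₀} equals n²(n−2)/2. -/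
open Finset

lemma aux_pairs {α : Type*} [DecidableEq α] (F : Finset α → ℤ) (E : Finset α) :
    ∑ j ∈ E, ∑ k ∈ E, F {j, k} = 2 * ∑ S ∈ E.powersetCard 2, F S + ∑ j ∈ E, F {j} := by
  induction E using Finset.induction_on with
  | empty =>
    have h : (∅ : Finset α).powersetCard 2 = ∅ := Finset.powersetCard_eq_empty.2 (by simp)
    rw [h]; simp
  | insert a s ha ih =>
    have hd : Disjoint (s.powersetCard 2) ((s.powersetCard 1).image (insert a)) := by
      rw [Finset.disjoint_left]
      intro S hS hS'
      rw [Finset.mem_image] at hS'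
      obtain ⟨T, _, rfl⟩ := hS'
      exact ha ((Finset.mem_powersetCard.1 hS).1 (Finset.mem_insert_self _ _))
    have hinj : Set.InjOn (insert a) ((s.powersetCard 1 : Finset (Finset α)) : Set (Finset α)) := by
      intro S hS T hT h
      have h1 : a ∉ S := fun h => ha ((Finset.mem_powersetCard.1 (Finset.mem_coe.1 hS)).1 h)
      have h2 : a ∉ T := fun h => ha ((Finset.mem_powersetCard.1 (Finset.mem_coe.1 hT)).1 h)
      rw [← Finset.erase_insert h1, ← Finset.erase_insert h2]
      exact congrArg (fun U => Finset.erase U a) h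
    rw [Finset.powersetCard_succ_insert ha, Finset.sum_union hd, Finset.sum_image hinj,
      Finset.powersetCard_one, Finset.sum_map]
    simp only [Finset.sum_insert ha, Finset.sum_add_distrib, ih]
    have : ∀ x, ({x, a} : Finset α) = {a, x} := fun x => Finset.pair_comm _ _
    simp [this]
    ring

lemma aux_gram (n : ℕ) (hn : 8 ≤ n)
    (H : Fin n → Fin (n - 1) → ℤ)
    (hpm : ∀ i j, H i j = 1 ∨ H i j = -1)
    (hbal : ∀ j, ∑ i : Fin n, H i j = 0)
    (horth : ∀ j k : Fin (n - 1), j ≠ k → ∑ i : Fin n, H i j * H i k = 0) (a b : Fin n) :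
    ∑ j, H a j * H b j = (if a = b then (n : ℤ) else 0) - 1 := by
  let M : Matrix (Fin n) (Option (Fin (n - 1))) ℚ :=
    Matrix.of fun i o => o.elim 1 (fun j => (H i j : ℚ))
  have hn0 : (n : ℚ) ≠ 0 := by
    have : n ≠ 0 := by omega
    exact_mod_cast this
  have hsq : ∀ i j, H i j * H i j = 1 := fun i j => by rcases hpm i j with h | h <;> simp [h]
  have h1 : ((n : ℚ)⁻¹ • M.transpose) * M = 1 := by
    ext o p
    rw [Matrix.smul_mul, Matrix.smul_apply, Matrix.mul_apply]
    rcases o with _ | j <;> rcases p with _ | k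
    · simp [M, hn0]
    · have := hbal k
      have h' : ∑ i, (H i k : ℚ) = 0 := by exact_mod_cast this
      simp [M, h']
    · have := hbal j
      have h' : ∑ i, (H i j : ℚ) = 0 := by exact_mod_cast this
      simp [M, h']
    · by_cases hjk : j = k
      · subst hjk
        have h' : ∑ i, (H i j : ℚ) * H i j = n := by
          have : ∑ i, H i j * H i j = n := by simp [hsq]
          exact_mod_cast this
        simp [M, h', hn0]
      · have h' : ∑ i, (H i j : ℚ) * H i k = 0 := by exact_mod_cast horth j k hjk
        simp [M, h', hjk, Matrix.one_apply]
  have hc : Fintype.card (Option (Fin (n-1))) = Fintype.card (Fin n) := by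
    simp; omega
  have h2 := (Matrix.mul_eq_one_comm_of_card_eq _ _ _ hc).1 h1
  have h3 := congrFun (congrFun h2 a) b
  rw [Matrix.mul_smul, Matrix.smul_apply, Matrix.mul_apply, Fintype.sum_option] at h3
  simp only [M, Matrix.of_apply, Matrix.transpose_apply, Option.elim, smul_eq_mul,
    Matrix.one_apply] at h3
  have h4 : ((∑ j, H a j * H b j : ℤ) : ℚ) = (if a = b then (n : ℚ) else 0) - 1 := by
    push_cast
    rw [inv_mul_eq_iff_eq_mul₀ hn0] at h3
    split_ifs at h3 ⊢ <;> linarith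
  have h5 : ((∑ j, H a j * H b j : ℤ) : ℚ) = (((if a = b then (n : ℤ) else 0) - 1 : ℤ) : ℚ) := by
    rw [h4]; split_ifs <;> simp
  exact_mod_cast h5

/-- For a saturated `OA(n, n-1, 2, 2)` with a fixed column `c_{i₀}`,
the sum of `J₃(c_{i₀}, c_j, c_k)²` over all unordered pairs `{c_j, c_k}` of distinct
columns different from `c_{i₀}` equals `n²(n-2)/2`. -/
theorem sum_J3_sq_fixed_column (n : ℕ) (hn : 8 ≤ n) (h4 : 4 ∣ n)
    (H : Fin n → Fin (n - 1) → ℤ)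
    (hpm : ∀ i j, H i j = 1 ∨ H i j = -1)
    (hbal : ∀ j, ∑ i : Fin n, H i j = 0)
    (horth : ∀ j k : Fin (n - 1), j ≠ k → ∑ i : Fin n, H i j * H i k = 0)
    (i0 : Fin (n - 1)) :
    ∑ S ∈ ((Finset.univ : Finset (Fin (n - 1))).erase i0).powersetCard 2,
        (∑ i : Fin n, H i i0 * ∏ j ∈ S, H i j) ^ 2
      = (n : ℤ) ^ 2 * ((n : ℤ) - 2) / 2 := by
  have hsq : ∀ i j, H i j * H i j = 1 := fun i j => by rcases hpm i j with h | h <;> simp [h]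
  have hp := aux_pairs (fun S => (∑ i : Fin n, H i i0 * ∏ j ∈ S, H i j) ^ 2)
    ((Finset.univ : Finset (Fin (n - 1))).erase i0)
  have hz : ∑ j ∈ (Finset.univ : Finset (Fin (n - 1))).erase i0,
      (∑ i : Fin n, H i i0 * ∏ j ∈ {j}, H i j) ^ 2 = 0 := by
    refine Finset.sum_eq_zero fun j hj => ?_
    simp [horth i0 j (Finset.ne_of_mem_erase hj).symm]
  have hg : ∀ j ∈ (Finset.univ : Finset (Fin (n - 1))).erase i0,
      ∀ k ∈ (Finset.univ : Finset (Fin (n - 1))).erase i0,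
      (∑ i : Fin n, H i i0 * ∏ j ∈ {j, k}, H i j) ^ 2
        = (∑ i : Fin n, H i i0 * (H i j * H i k)) ^ 2 := by
    intro j hj k hk
    by_cases hjk : j = k
    · subst hjk
      simp [hsq, hbal, horth i0 j (Finset.ne_of_mem_erase hj).symm]
    · simp [Finset.prod_pair hjk]
  have hA : ∀ k, ∑ i : Fin n, H i i0 * (H i i0 * H i k) = 0 := fun k => by
    simp [← mul_assoc, hsq, hbal]
  have hB : ∀ k, ∑ i : Fin n, H i i0 * (H i k * H i i0) = 0 := fun k => by
    simp_rw [mul_comm (H _ k)]; exact hA k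
  have hfull : ∑ j ∈ (Finset.univ : Finset (Fin (n - 1))).erase i0,
      ∑ k ∈ (Finset.univ : Finset (Fin (n - 1))).erase i0,
        (∑ i : Fin n, H i i0 * (H i j * H i k)) ^ 2
      = ∑ j, ∑ k, (∑ i : Fin n, H i i0 * (H i j * H i k)) ^ 2 := by
    rw [Finset.sum_erase _ (by simp [hA])]
    exact Finset.sum_congr rfl fun j _ => Finset.sum_erase _ (by simp [hB])
  have hT : ∑ j, ∑ k, (∑ i : Fin n, H i i0 * (H i j * H i k)) ^ 2
      = ∑ a, ∑ b, H a i0 * H b i0 * (∑ j, H a j * H b j) ^ 2 := by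
    simp_rw [sq, Finset.sum_mul_sum, Finset.mul_sum]
    rw [Finset.sum_congr rfl fun j _ => Finset.sum_comm]
    rw [Finset.sum_comm]
    refine Finset.sum_congr rfl fun a _ => ?_
    rw [Finset.sum_congr rfl fun j _ => Finset.sum_comm]
    rw [Finset.sum_comm]
    refine Finset.sum_congr rfl fun b _ => ?_
    refine Finset.sum_congr rfl fun j _ => ?_
    refine Finset.sum_congr rfl fun k _ => ?_
    ring
  have hV : ∑ a, ∑ b, H a i0 * H b i0 * (∑ j, H a j * H b j) ^ 2
      = (n : ℤ) ^ 2 * ((n : ℤ) - 2) := by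
    have : ∀ a b, H a i0 * H b i0 * (∑ j, H a j * H b j) ^ 2
        = H a i0 * H b i0 + if a = b then ((n : ℤ) ^ 2 - 2 * n) else 0 := by
      intro a b
      rw [aux_gram n hn H hpm hbal horth]
      split_ifs with h
      · subst h
        rw [hsq]; ring
      · ring
    simp_rw [this, Finset.sum_add_distrib, ← Finset.mul_sum, hbal]
    simp
    ring
  rw [Finset.sum_congr rfl fun j hj => Finset.sum_congr rfl fun k hk => hg j hj k hk,
    hz, hfull, hT, hV] at hp
  rw [hp]
  simp
end

section
/- Let n ≥ 8 be divisible by 4, let H be a saturated orthogonal array OA(n,n−1,2,2), and let H' be the n×(n−2) design obtained from H by deleting one fixed column. Let X be the n × ((n−2)(n−1)/2) two-level design whose columns are the n−2 columns of H' together with the interaction columns of all (n−2 choose 2) unordered pairs of distinct columns of H'. Then E(s²)(X) = n(n−4)/(n−3), and X is E(s²)-optimal: E(s²)(X) ≤ E(s²)(Y) for every n × ((n−2)(n−1)/2) balanced two-level design Y. -/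
open Finset

/-- The `E(s²)` value of an `n × m` two-level design `X` (columns indexed by `ι`,
`m = card ι`): the average of the squared off-diagonal entries of `XᵀX`. -/
noncomputable def Es2 {n : ℕ} {ι : Type} [Fintype ι] [DecidableEq ι]
    (X : Fin n → ι → ℚ) : ℚ :=
  (∑ i : ι, ∑ j : ι, if i ≠ j then (∑ r : Fin n, X r i * X r j) ^ 2 else 0) /
    ((Fintype.card ι : ℚ) * ((Fintype.card ι : ℚ) - 1))

theorem pairs_aux {α : Type} [Fintype α] [LinearOrder α] (a : α → ℚ)
    (ha : ∀ i, a i * a i = 1) :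
    ∑ p : {p : α × α // p.1 < p.2}, a p.1.1 * a p.1.2
      = ((∑ i, a i) ^ 2 - Fintype.card α) / 2 := by
  have h1 : ∑ p : {p : α × α // p.1 < p.2}, a p.1.1 * a p.1.2
      = ∑ i, ∑ j, if i < j then a i * a j else 0 := by
    rw [← Finset.sum_subtype (Finset.univ.filter fun p : α × α => p.1 < p.2) (by simp)
      (fun p => a p.1 * a p.2), Finset.sum_filter, Fintype.sum_prod_type]
  have h2 : (∑ i, ∑ j, if i < j then a i * a j else 0)
      = ∑ i, ∑ j, if j < i then a i * a j else 0 := by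
    rw [Finset.sum_comm]
    simp only [mul_comm]
  have h3 : (∑ i, a i) ^ 2 = (∑ i, ∑ j, if i < j then a i * a j else 0)
      + (∑ i, ∑ j, if j < i then a i * a j else 0) + Fintype.card α := by
    have : (Fintype.card α : ℚ) = ∑ i : α, ∑ j : α, if i = j then a i * a j else 0 := by
      simp [ha]
    rw [this, sq, Finset.sum_mul_sum]
    simp only [← Finset.sum_add_distrib]
    refine Finset.sum_congr rfl fun i _ => Finset.sum_congr rfl fun j _ => ?_
    rcases lt_trichotomy i j with h | h | h
    · simp [h, h.not_gt, h.ne]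
    · simp [h]
    · simp [h, h.not_gt, h.ne']
  rw [h1, h3, ← h2]; ring

theorem num_aux {n : ℕ} {ι : Type} [Fintype ι] [DecidableEq ι]
    (X : Fin n → ι → ℚ) (hX : ∀ r i, X r i * X r i = 1) :
    (∑ i : ι, ∑ j : ι, if i ≠ j then (∑ r : Fin n, X r i * X r j) ^ 2 else 0)
      = (∑ r, ∑ s, (∑ i, X r i * X s i) ^ 2) - Fintype.card ι * (n : ℚ) ^ 2 := by
  have h1 : (∑ r, ∑ s, (∑ i, X r i * X s i) ^ 2)
      = ∑ i : ι, ∑ j : ι, (∑ r : Fin n, X r i * X r j) ^ 2 := by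
    simp only [sq, Finset.sum_mul_sum]
    simp only [← Fintype.sum_prod_type']
    refine Fintype.sum_equiv
      ⟨fun x => (x.2.2.1, x.2.2.2, x.1, x.2.1), fun x => (x.2.2.1, x.2.2.2, x.1, x.2.1),
        fun _ => rfl, fun _ => rfl⟩ _ _ ?_
    intro x
    simp only [Equiv.coe_fn_mk]
    ring
  have h2 : (Fintype.card ι * (n : ℚ) ^ 2) = ∑ i : ι, ∑ j : ι,
      if i = j then (∑ r : Fin n, X r i * X r j) ^ 2 else 0 := by
    simp [hX]
  rw [h1, h2, eq_sub_iff_add_eq]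
  simp only [← Finset.sum_add_distrib]
  refine Finset.sum_congr rfl fun i _ => Finset.sum_congr rfl fun j _ => ?_
  by_cases h : i = j <;> simp [h]

theorem rows_aux (n : ℕ) (hn : 8 ≤ n) (H : Fin n → Fin (n - 1) → ℚ)
    (hpm : ∀ i j, H i j * H i j = 1)
    (hbal : ∀ j, ∑ i : Fin n, H i j = 0)
    (horth : ∀ j k : Fin (n - 1), j ≠ k → ∑ i : Fin n, H i j * H i k = 0) (r s : Fin n) :
    ∑ j, H r j * H s j = (if r = s then (n : ℚ) else 0) - 1 := by
  have hn0 : (n : ℚ) ≠ 0 := by positivity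
  let M : Matrix (Fin n) (Option (Fin (n - 1))) ℚ := fun i o => o.elim 1 (H i)
  have e : Option (Fin (n - 1)) ≃ Fin n := Fintype.equivOfCardEq (by simp; omega)
  have h1 : ((n : ℚ)⁻¹ • M.transpose) * M = 1 := by
    ext a b
    simp only [Matrix.mul_apply, Matrix.smul_apply, Matrix.transpose_apply, smul_eq_mul,
      mul_assoc, ← Finset.mul_sum, Matrix.one_apply]
    rcases a with _ | a <;> rcases b with _ | b
    · simp [M, hn0]
    · simp [M, hbal]
    · simp [M, hbal]
    · by_cases h : a = b
      · subst h; simp [M, hpm, hn0]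
      · simp [M, h, horth a b h]
  have h2 := (Matrix.mul_eq_one_comm_of_equiv e).1 h1
  have h3 := congrFun (congrFun h2 r) s
  simp only [Matrix.mul_apply, Matrix.smul_apply, Matrix.transpose_apply, smul_eq_mul,
      Matrix.one_apply, Fintype.sum_option] at h3
  simp only [M, Option.elim, mul_left_comm _ ((n:ℚ)⁻¹), ← Finset.mul_sum, ← mul_add] at h3
  rw [inv_mul_eq_iff_eq_mul₀ hn0] at h3
  split_ifs at h3 ⊢ <;> linarith

theorem G_aux (n : ℕ) (hn : 8 ≤ n)
    (H : Fin n → Fin (n - 1) → ℚ)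
    (hpm : ∀ i j, H i j * H i j = 1)
    (hbal : ∀ j, ∑ i : Fin n, H i j = 0)
    (horth : ∀ j k : Fin (n - 1), j ≠ k → ∑ i : Fin n, H i j * H i k = 0)
    (cdel : Fin (n - 1))
    (X : Fin n → ({j : Fin (n - 1) // j ≠ cdel} ⊕
      {p : {j : Fin (n - 1) // j ≠ cdel} × {j : Fin (n - 1) // j ≠ cdel} //
        p.1.1 < p.2.1}) → ℚ)
    (hX : ∀ r, X r = Sum.elim (fun j => H r j.1) (fun p => H r p.1.1.1 * H r p.1.2.1))
    (r s : Fin n) :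
    ∑ i, X r i * X s i = if r = s then ((n : ℚ) - 2) * (n - 1) / 2 else -((n : ℚ) - 2) / 2 := by
  have hp := pairs_aux (α := {j : Fin (n - 1) // j ≠ cdel}) (fun j => H r j.1 * H s j.1)
    (fun i => by rw [mul_mul_mul_comm, hpm, hpm, one_mul])
  have hc : (Fintype.card {j : Fin (n - 1) // j ≠ cdel} : ℚ) = n - 2 := by
    rw [Fintype.card_subtype_compl, Fintype.card_subtype_eq, Fintype.card_fin,
      show n - 1 - 1 = n - 2 by omega, Nat.cast_sub (by omega)]
    norm_num
  have ht : ∑ j : {j : Fin (n - 1) // j ≠ cdel}, H r j.1 * H s j.1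
      = (if r = s then (n : ℚ) else 0) - 1 - H r cdel * H s cdel := by
    rw [← rows_aux n hn H hpm hbal horth r s,
      ← Finset.sum_subtype (Finset.univ.erase cdel) (by simp) (fun j => H r j * H s j),
      ← Finset.sum_erase_add _ _ (Finset.mem_univ cdel)]
    ring
  have hp' : ∑ p : {p : {j : Fin (n - 1) // j ≠ cdel} × {j : Fin (n - 1) // j ≠ cdel} //
        p.1.1 < p.2.1}, (H r p.1.1.1 * H r p.1.2.1) * (H s p.1.1.1 * H s p.1.2.1)
      = ((∑ j : {j : Fin (n - 1) // j ≠ cdel}, H r j.1 * H s j.1) ^ 2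
        - Fintype.card {j : Fin (n - 1) // j ≠ cdel}) / 2 := by
    rw [← hp]
    refine Finset.sum_congr rfl fun p _ => ?_
    ring
  simp only [hX, Fintype.sum_sum_type, Sum.elim_inl, Sum.elim_inr]
  rw [hp', ht, hc]
  split_ifs with h
  · subst h; rw [hpm]; ring
  · have h1 : (H r cdel * H s cdel) * (H r cdel * H s cdel) = 1 := by
      rw [mul_mul_mul_comm, hpm, hpm, one_mul]
    linear_combination (1/2) * h1

theorem val_aux (x : ℚ) (hx : 8 ≤ x) :
    (x * ((x - 2) * (x - 1) / 2) ^ 2 + x * (x - 1) * ((x - 2) / 2) ^ 2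
      - (x - 2) * (x - 1) / 2 * x ^ 2) / ((x - 2) * (x - 1) / 2 * ((x - 2) * (x - 1) / 2 - 1))
      = x * (x - 4) / (x - 3) := by
  have h1 : x - 1 ≠ 0 := by linarith
  have h2 : x - 2 ≠ 0 := by linarith
  have h3 : x - 3 ≠ 0 := by linarith
  have h0 : x ≠ 0 := by linarith
  have : (x - 2) * (x - 1) / 2 - 1 = x * (x - 3) / 2 := by ring
  rw [this]
  field_simp
  ring

theorem lower_aux {n : ℕ} (hn : 8 ≤ n) {ι : Type} [Fintype ι] (Y : Fin n → ι → ℚ)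
    (hY : ∀ r i, Y r i * Y r i = 1) (hb : ∀ j, ∑ i : Fin n, Y i j = 0)
    (hc : (Fintype.card ι : ℚ) = ((n : ℚ) - 2) * (n - 1) / 2) :
    (n : ℚ) * (((n : ℚ) - 2) * (n - 1) / 2) ^ 2 + n * (n - 1) * (((n : ℚ) - 2) / 2) ^ 2
      ≤ ∑ r, ∑ s, (∑ i, Y r i * Y s i) ^ 2 := by
  -- pointwise: `g² ≥ 2 c g - c²` with `c = -(n-2)/2` off the diagonal
  set c : ℚ := -((n : ℚ) - 2) / 2 with hcdef
  set m : ℚ := ((n : ℚ) - 2) * (n - 1) / 2 with hm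
  have hz : ∑ r, ∑ s, ∑ i, Y r i * Y s i = 0 := by
    refine Finset.sum_eq_zero fun r _ => ?_
    rw [Finset.sum_comm]
    exact Finset.sum_eq_zero fun i _ => by rw [← Finset.mul_sum, hb, mul_zero]
  have hpt : ∀ r s, 2 * c * (∑ i, Y r i * Y s i) - c ^ 2 + (if r = s then (m - c) ^ 2 else 0)
      ≤ (∑ i, Y r i * Y s i) ^ 2 := by
    intro r s
    split_ifs with h
    · subst h
      simp only [hY, Finset.sum_const, Finset.card_univ, nsmul_eq_mul, mul_one, hc]
      apply le_of_eq; ring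
    · nlinarith [sq_nonneg ((∑ i, Y r i * Y s i) - c)]
  have := Finset.sum_le_sum fun r (_ : r ∈ Finset.univ) =>
    Finset.sum_le_sum fun s (_ : s ∈ Finset.univ) => hpt r s
  refine le_trans (le_of_eq ?_) this
  simp only [Finset.sum_add_distrib, Finset.sum_sub_distrib, ← Finset.mul_sum, hz]
  simp [hcdef, hm]
  ring

/-- Deleting one fixed column from a saturated `OA(n, n-1, 2, 2)` gives
`H'` with `n-2` columns; augmenting `H'` with all its two-column interactions yields
an `n × ((n-2)(n-1)/2)` design `X` with `E(s²)(X) = n(n-4)/(n-3)`, which is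
`E(s²)`-optimal among all balanced `n × ((n-2)(n-1)/2)` two-level designs. -/
theorem Es2_optimal_full_delete_one (n : ℕ) (hn : 8 ≤ n) (h4 : 4 ∣ n)
    (H : Fin n → Fin (n - 1) → ℚ)
    (hpm : ∀ i j, H i j = 1 ∨ H i j = -1)
    (hbal : ∀ j, ∑ i : Fin n, H i j = 0)
    (horth : ∀ j k : Fin (n - 1), j ≠ k → ∑ i : Fin n, H i j * H i k = 0)
    (cdel : Fin (n - 1))
    (X : Fin n → ({j : Fin (n - 1) // j ≠ cdel} ⊕
      {p : {j : Fin (n - 1) // j ≠ cdel} × {j : Fin (n - 1) // j ≠ cdel} //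
        p.1.1 < p.2.1}) → ℚ)
    (hX : ∀ r, X r = Sum.elim (fun j => H r j.1) (fun p => H r p.1.1.1 * H r p.1.2.1)) :
    Es2 X = (n : ℚ) * ((n : ℚ) - 4) / ((n : ℚ) - 3) ∧
      ∀ Y : Fin n → Fin ((n - 2) * (n - 1) / 2) → ℚ,
        (∀ i j, Y i j = 1 ∨ Y i j = -1) → (∀ j, ∑ i : Fin n, Y i j = 0) →
          Es2 X ≤ Es2 Y := by
  have sqr : ∀ x : ℚ, x = 1 ∨ x = -1 → x * x = 1 := by
    rintro x (rfl | rfl) <;> norm_num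
  have hpm' : ∀ i j, H i j * H i j = 1 := fun i j => sqr _ (hpm i j)
  have hG := G_aux n hn H hpm' hbal horth cdel X hX
  have hX1 : ∀ r i, X r i * X r i = 1 := by
    intro r i
    rw [hX]
    rcases i with i | i
    · exact hpm' _ _
    · simp only [Sum.elim_inr]
      rw [mul_mul_mul_comm, hpm', hpm', one_mul]
  have hx : (8 : ℚ) ≤ n := by exact_mod_cast hn
  have hcX := hG ⟨0, by omega⟩ ⟨0, by omega⟩
  simp only [hX1, Finset.sum_const, Finset.card_univ, nsmul_eq_mul, mul_one, if_true] at hcX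
  have hSX : ∑ r, ∑ s, (∑ i, X r i * X s i) ^ 2 =
      (n : ℚ) * (((n : ℚ) - 2) * (n - 1) / 2) ^ 2 + n * (n - 1) * (((n : ℚ) - 2) / 2) ^ 2 := by
    have : ∀ r s, (∑ i, X r i * X s i) ^ 2 = (((n : ℚ) - 2) / 2) ^ 2 + (if r = s then
        (((n : ℚ) - 2) * (n - 1) / 2) ^ 2 - (((n : ℚ) - 2) / 2) ^ 2 else 0) := by
      intro r s
      rw [hG]
      split_ifs <;> ring
    simp only [this, Finset.sum_add_distrib]
    simp
    ring
  have hval : Es2 X = (n : ℚ) * ((n : ℚ) - 4) / ((n : ℚ) - 3) := by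
    unfold Es2
    rw [num_aux X hX1, hSX, hcX, val_aux _ hx]
  refine ⟨hval, fun Y hY hb => ?_⟩
  have hY1 : ∀ r i, Y r i * Y r i = 1 := fun r i => sqr _ (hY r i)
  have hcY : (Fintype.card (Fin ((n - 2) * (n - 1) / 2)) : ℚ) = ((n : ℚ) - 2) * (n - 1) / 2 := by
    rw [Fintype.card_fin, Nat.cast_div, Nat.cast_mul, Nat.cast_sub (by omega),
      Nat.cast_sub (by omega)]
    · norm_num
    · obtain ⟨k, rfl⟩ := h4
      exact Dvd.dvd.mul_right (by omega) _
    · norm_num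
  have hl := lower_aux hn Y hY1 hb hcY
  rw [hval, ← val_aux _ hx]
  unfold Es2
  rw [num_aux Y hY1, hcY]
  apply div_le_div_of_nonneg_right
  · linarith
  · have : ((n : ℚ) - 2) * (n - 1) / 2 - 1 = n * (n - 3) / 2 := by ring
    rw [this]
    have h1 : (0 : ℚ) ≤ n - 1 := by linarith
    have h2 : (0 : ℚ) ≤ n - 2 := by linarith
    have h3 : (0 : ℚ) ≤ n - 3 := by linarith
    positivity
end

section
/- Let n ≥ 8 be divisible by 4 and let H be a saturated orthogonal array OA(n,n−1,2,2). Let X₀ be the n × (n(n−1)/2) design whose columns are the n−1 columns of H together with the interaction columns of all unordered pairs of distinct columns of H, and let X be obtained from X₀ by deleting any single column (either a column of H or an interaction column). Then E(s²)(X) = n²/(n+1), and X is E(s²)-optimal: E(s²)(X) ≤ E(s²)(Y) for every n × (n(n−1)/2 − 1) balanced two-level design Y. -/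
open Finset

theorem aux_swap {n : ℕ} {ι : Type} [Fintype ι] (X : Fin n → ι → ℚ) :
    ∑ i : ι, ∑ j : ι, (∑ r : Fin n, X r i * X r j) ^ 2 =
      ∑ r : Fin n, ∑ s : Fin n, (∑ i : ι, X r i * X s i) ^ 2 := by
  have e1 : ∀ i j, (∑ r : Fin n, X r i * X r j) ^ 2 =
      ∑ r : Fin n, ∑ s : Fin n, (X r i * X s i) * (X r j * X s j) := by
    intro i j
    rw [sq, Finset.sum_mul_sum]
    refine Finset.sum_congr rfl fun r _ => Finset.sum_congr rfl fun s _ => by ring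
  have e2 : ∀ r s, (∑ i : ι, X r i * X s i) ^ 2 =
      ∑ i : ι, ∑ j : ι, (X r i * X s i) * (X r j * X s j) := by
    intro r s
    rw [sq, Finset.sum_mul_sum]
  simp_rw [e1, e2]
  calc _ = ∑ i : ι, ∑ r : Fin n, ∑ j : ι, ∑ s : Fin n, (X r i * X s i) * (X r j * X s j) :=
        Finset.sum_congr rfl fun i _ => Finset.sum_comm
    _ = ∑ r : Fin n, ∑ i : ι, ∑ j : ι, ∑ s : Fin n, (X r i * X s i) * (X r j * X s j) :=
        Finset.sum_comm
    _ = ∑ r : Fin n, ∑ i : ι, ∑ s : Fin n, ∑ j : ι, (X r i * X s i) * (X r j * X s j) :=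
        Finset.sum_congr rfl fun r _ => Finset.sum_congr rfl fun i _ => Finset.sum_comm
    _ = _ := Finset.sum_congr rfl fun r _ => Finset.sum_comm

theorem aux_offdiag {ι : Type} [Fintype ι] [DecidableEq ι] (f : ι → ι → ℚ) :
    (∑ i : ι, ∑ j : ι, if i ≠ j then f i j else 0) = ∑ i : ι, ∑ j : ι, f i j - ∑ i, f i i := by
  rw [← Finset.sum_sub_distrib]
  refine Finset.sum_congr rfl fun i _ => ?_
  have : ∀ j, (if i ≠ j then f i j else 0) = f i j - if i = j then f i j else 0 := by
    intro j; by_cases h : i = j <;> simp [h]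
  simp_rw [this, Finset.sum_sub_distrib]
  simp

theorem aux_main {n : ℕ} {ι : Type} [Fintype ι] [DecidableEq ι] (X : Fin n → ι → ℚ)
    (hpm : ∀ i j, X i j = 1 ∨ X i j = -1) (hbal : ∀ j, ∑ i : Fin n, X i j = 0) :
    (∑ i : ι, ∑ j : ι, if i ≠ j then (∑ r : Fin n, X r i * X r j) ^ 2 else 0) =
      (∑ r : Fin n, ∑ s : Fin n,
        if r ≠ s then ((∑ i : ι, X r i * X s i) + (n : ℚ) / 2) ^ 2 else 0)
      + n * ((Fintype.card ι : ℚ) + n / 2) ^ 2 - (n : ℚ) ^ 4 / 4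
      - (Fintype.card ι : ℚ) * (n : ℚ) ^ 2 := by
  have hsq : ∀ r i, X r i * X r i = 1 := by
    intro r i; rcases hpm r i with h | h <;> rw [h] <;> norm_num
  rw [aux_offdiag, aux_offdiag, aux_swap]
  have hz : ∀ r, ∑ s : Fin n, ∑ i : ι, X r i * X s i = 0 := by
    intro r
    rw [Finset.sum_comm]
    refine Finset.sum_eq_zero fun i _ => ?_
    rw [← Finset.mul_sum, hbal, mul_zero]
  have e : ∀ r, ∑ s : Fin n, ((∑ i : ι, X r i * X s i) + (n : ℚ) / 2) ^ 2 =
      ∑ s : Fin n, (∑ i : ι, X r i * X s i) ^ 2 + (n : ℚ) ^ 3 / 4 := by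
    intro r
    have : ∀ s, ((∑ i : ι, X r i * X s i) + (n : ℚ) / 2) ^ 2 =
      (∑ i : ι, X r i * X s i) ^ 2 + (n : ℚ) * (∑ i : ι, X r i * X s i) + (n : ℚ) ^ 2 / 4 := by
      intro s; ring
    simp_rw [this, Finset.sum_add_distrib, ← Finset.mul_sum, hz]
    simp
    ring
  simp_rw [e, hsq, Finset.sum_add_distrib]
  simp
  ring

theorem aux_pairs_s12 {k : ℕ} (f : Fin k → ℚ) :
    2 * ∑ p : {p : Fin k × Fin k // p.1 < p.2}, f p.1.1 * f p.1.2 =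
      (∑ i, f i) ^ 2 - ∑ i, f i ^ 2 := by
  have h1 : ∑ p : {p : Fin k × Fin k // p.1 < p.2}, f p.1.1 * f p.1.2 =
      ∑ i, ∑ j, if i < j then f i * f j else 0 := by
    rw [← Finset.sum_product', Finset.univ_product_univ, ← Finset.sum_filter]
    exact (Finset.sum_subtype _ (by simp) (fun p : Fin k × Fin k => f p.1 * f p.2)).symm
  have h2 : (∑ i, ∑ j, if i < j then f i * f j else 0) =
      ∑ i, ∑ j, if j < i then f i * f j else 0 := by
    rw [Finset.sum_comm]
    simp_rw [mul_comm]
  have h3 := aux_offdiag (fun i j : Fin k => f i * f j)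
  have h4 : (∑ i, ∑ j, if i ≠ j then f i * f j else 0) =
      (∑ i, ∑ j, if i < j then f i * f j else 0) +
      ∑ i, ∑ j, if j < i then f i * f j else 0 := by
    simp_rw [← Finset.sum_add_distrib]
    refine Finset.sum_congr rfl fun i _ => Finset.sum_congr rfl fun j _ => ?_
    rcases lt_trichotomy i j with h | h | h
    · simp [h, h.ne, h.not_gt]
    · simp [h]
    · simp [h, h.ne', h.not_gt]
  rw [h4, ← h2] at h3
  rw [h1, two_mul, h3, sq, Finset.sum_mul_sum]
  simp_rw [sq]

theorem aux_rows (n : ℕ) (hn : 8 ≤ n)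
    (H : Fin n → Fin (n - 1) → ℚ)
    (hpm : ∀ i j, H i j = 1 ∨ H i j = -1)
    (hbal : ∀ j, ∑ i : Fin n, H i j = 0)
    (horth : ∀ j k : Fin (n - 1), j ≠ k → ∑ i : Fin n, H i j * H i k = 0)
    (r s : Fin n) (hrs : r ≠ s) : ∑ j, H r j * H s j = -1 := by
  have hsq : ∀ r i, H r i * H r i = 1 := by
    intro r i; rcases hpm r i with h | h <;> rw [h] <;> norm_num
  have hn0 : (n : ℚ) ≠ 0 := by positivity
  let A : Matrix (Fin n) (Option (Fin (n - 1))) ℚ := Matrix.of fun i c => c.elim 1 (H i)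
  let B : Matrix (Option (Fin (n - 1))) (Fin n) ℚ :=
    Matrix.of fun c i => (n : ℚ)⁻¹ * c.elim 1 (H i)
  have hBA : B * A = 1 := by
    ext c d
    simp only [Matrix.mul_apply, A, B, Matrix.of_apply, mul_assoc, ← Finset.mul_sum]
    rcases c with _ | c <;> rcases d with _ | d
    · simp [hn0]
    · simp [hbal]
    · simp [hbal]
    · by_cases h : c = d
      · subst h; simp [hsq, hn0]
      · simp [horth c d h, h]
  have hAB : A * B = 1 := (Matrix.mul_eq_one_comm_of_card_eq _ _ _ (by simp; omega)).1 hBA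
  have := congrFun (congrFun hAB r) s
  simp only [Matrix.mul_apply, A, B, Matrix.of_apply, Matrix.one_apply_ne hrs,
    Fintype.sum_option, Option.elim] at this
  simp_rw [mul_left_comm _ ((n : ℚ)⁻¹), ← Finset.mul_sum, ← mul_add] at this
  have := (mul_eq_zero.1 this).resolve_left (inv_ne_zero hn0)
  linarith

theorem aux_odd {ι : Type} [Fintype ι] (f : ι → ℚ) (hf : ∀ i, f i = 1 ∨ f i = -1) :
    ∃ k : ℤ, ∑ i, f i = (Fintype.card ι : ℚ) + 2 * k := by
  have : ∀ i, ∃ k : ℤ, f i = 1 + 2 * k := by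
    intro i
    rcases hf i with h | h
    · exact ⟨0, by rw [h]; norm_num⟩
    · exact ⟨-1, by rw [h]; norm_num⟩
  choose k hk using this
  refine ⟨∑ i, k i, ?_⟩
  simp_rw [hk, Finset.sum_add_distrib, ← Finset.mul_sum]
  simp

/-- Deleting any single column (a main-effect or an interaction column)
from the `n × (n(n-1)/2)` design obtained by augmenting a saturated `OA(n, n-1, 2, 2)`
with all its two-column interactions yields a design `X` with `E(s²)(X) = n²/(n+1)`,
which is `E(s²)`-optimal among all balanced `n × (n(n-1)/2 - 1)` two-level designs. -/
theorem Es2_optimal_full_minus_one_col (n : ℕ) (hn : 8 ≤ n) (h4 : 4 ∣ n)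
    (H : Fin n → Fin (n - 1) → ℚ)
    (hpm : ∀ i j, H i j = 1 ∨ H i j = -1)
    (hbal : ∀ j, ∑ i : Fin n, H i j = 0)
    (horth : ∀ j k : Fin (n - 1), j ≠ k → ∑ i : Fin n, H i j * H i k = 0)
    (c0 : Fin (n - 1) ⊕ {p : Fin (n - 1) × Fin (n - 1) // p.1 < p.2})
    (X : Fin n →
      {c : Fin (n - 1) ⊕ {p : Fin (n - 1) × Fin (n - 1) // p.1 < p.2} // c ≠ c0} → ℚ)
    (hX : ∀ r c, X r c =
      Sum.elim (fun j => H r j) (fun p => H r p.1.1 * H r p.1.2) c.1) :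
    Es2 X = (n : ℚ) ^ 2 / ((n : ℚ) + 1) ∧
      ∀ Y : Fin n → Fin (n * (n - 1) / 2 - 1) → ℚ,
        (∀ i j, Y i j = 1 ∨ Y i j = -1) → (∀ j, ∑ i : Fin n, Y i j = 0) →
          Es2 X ≤ Es2 Y := by
  have hn0 : (8 : ℚ) ≤ n := by exact_mod_cast hn
  have hn1 : ((n - 1 : ℕ) : ℚ) = n - 1 := by
    rw [Nat.cast_sub (by omega)]; simp
  have hsq : ∀ r i, H r i * H r i = 1 := by
    intro r i; rcases hpm r i with h | h <;> rw [h] <;> norm_num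
  -- the full design
  let F : Fin n → Fin (n - 1) ⊕ {p : Fin (n - 1) × Fin (n - 1) // p.1 < p.2} → ℚ :=
    fun r => Sum.elim (fun j => H r j) (fun p => H r p.1.1 * H r p.1.2)
  have hXF : ∀ r c, X r c = F r c.1 := hX
  have hFpm : ∀ r c, F r c = 1 ∨ F r c = -1 := by
    intro r c
    rcases c with j | p
    · exact hpm r j
    · rcases hpm r p.1.1 with h | h <;> rcases hpm r p.1.2 with h' | h' <;> simp [F, h, h']
  have hFbal : ∀ c, ∑ r, F r c = 0 := by
    intro c
    rcases c with j | p
    · exact hbal j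
    · exact horth _ _ p.2.ne
  have hFG : ∀ r s, r ≠ s → ∑ c, F r c * F s c = -(n : ℚ) / 2 := by
    intro r s hrs
    have h1 := aux_rows n hn H hpm hbal horth r s hrs
    have h2 := aux_pairs_s12 (fun j => H r j * H s j)
    have h3 : ∀ j, (H r j * H s j) ^ 2 = 1 := by
      intro j
      calc (H r j * H s j) ^ 2 = (H r j * H r j) * (H s j * H s j) := by ring
        _ = 1 := by rw [hsq, hsq, one_mul]
    simp_rw [h3] at h2
    rw [h1] at h2
    simp only [Finset.sum_const, Finset.card_univ, Fintype.card_fin, nsmul_eq_mul, hn1] at h2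
    rw [Fintype.sum_sum_type]
    simp only [F, Sum.elim_inl, Sum.elim_inr]
    rw [h1]
    simp_rw [mul_mul_mul_comm (H r _) (H r _)]
    linarith
  have hcard : (Fintype.card {c : Fin (n - 1) ⊕ {p : Fin (n - 1) × Fin (n - 1) // p.1 < p.2} //
      c ≠ c0} : ℚ) = n * (n - 1) / 2 - 1 := by
    have h2 := aux_pairs_s12 (fun _ : Fin (n - 1) => (1 : ℚ))
    simp only [mul_one, one_pow, Finset.sum_const, Finset.card_univ, Fintype.card_fin,
      nsmul_eq_mul, hn1] at h2
    have h3 : Fintype.card {c : Fin (n - 1) ⊕ {p : Fin (n - 1) × Fin (n - 1) // p.1 < p.2} //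
      c ≠ c0} + 1 = (n - 1) + Fintype.card {p : Fin (n - 1) × Fin (n - 1) // p.1 < p.2} := by
      have h4 := Fintype.card_subtype_compl (fun c => c = c0)
      rw [Fintype.card_subtype_eq, Fintype.card_sum, Fintype.card_fin] at h4
      have h5 : Fintype.card {c : Fin (n - 1) ⊕ {p : Fin (n - 1) × Fin (n - 1) // p.1 < p.2} //
        c ≠ c0} = Fintype.card {c // ¬ c = c0} := rfl
      omega
    have h4 : (Fintype.card {c : Fin (n - 1) ⊕ {p : Fin (n - 1) × Fin (n - 1) // p.1 < p.2} //
      c ≠ c0} : ℚ) + 1 = ((n - 1 : ℕ) : ℚ) +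
        Fintype.card {p : Fin (n - 1) × Fin (n - 1) // p.1 < p.2} := by exact_mod_cast h3
    rw [hn1] at h4
    linarith
  have hXG : ∀ r s, r ≠ s → ((∑ c, X r c * X s c) + (n : ℚ) / 2) ^ 2 = 1 := by
    intro r s hrs
    have h1 := hFG r s hrs
    have h2 : ∑ c, F r c * F s c = F r c0 * F s c0 + ∑ c, X r c * X s c := by
      simp_rw [hXF]
      rw [← Finset.add_sum_erase _ _ (Finset.mem_univ c0)]
      congr 1
      exact Finset.sum_subtype _ (by simp) (fun c => F r c * F s c)
    have h3 : (∑ c, X r c * X s c) + (n : ℚ) / 2 = -(F r c0 * F s c0) := by linarith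
    rw [h3]
    rcases hFpm r c0 with h | h <;> rcases hFpm s c0 with h' | h' <;> rw [h, h'] <;> norm_num
  have hT : (∑ r : Fin n, ∑ s : Fin n, if r ≠ s then (1 : ℚ) else 0) = n * (n - 1) := by
    rw [aux_offdiag (fun _ _ => (1 : ℚ))]
    simp
    ring
  have hXS := aux_main X (fun r c => by rw [hXF]; exact hFpm r c.1)
    (fun c => by simp_rw [hXF]; exact hFbal c.1)
  have hXT : (∑ r : Fin n, ∑ s : Fin n,
      if r ≠ s then ((∑ c, X r c * X s c) + (n : ℚ) / 2) ^ 2 else 0) = (n : ℚ) * ((n : ℚ) - 1) := by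
    rw [← hT]
    refine Finset.sum_congr rfl fun r _ => Finset.sum_congr rfl fun s _ => ?_
    split_ifs with h
    · exact hXG r s h
    · rfl
  rw [hXT] at hXS
  have hpos : (0 : ℚ) < (n * (n - 1) / 2 - 1) * (n * (n - 1) / 2 - 1 - 1) := by
    have : (56 : ℚ) ≤ n * (n - 1) := by nlinarith
    apply mul_pos <;> linarith
  refine ⟨?_, ?_⟩
  · unfold Es2
    rw [hXS, hcard, div_eq_div_iff hpos.ne' (by positivity)]
    ring
  · intro Y hY hYb
    have hYS := aux_main Y hY hYb
    obtain ⟨q, hq⟩ := h4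
    have hm : n * (n - 1) / 2 = 2 * (q * (n - 1)) := by
      have : n * (n - 1) = 2 * (2 * (q * (n - 1))) := by
        generalize n - 1 = t
        rw [hq]; ring
      omega
    have hqp : 1 ≤ q * (n - 1) := Nat.mul_pos (by omega) (by omega)
    have hnq : (n : ℚ) = 4 * q := by exact_mod_cast hq
    have hmc : ((n * (n - 1) / 2 - 1 : ℕ) : ℚ) = 2 * (q * (n - 1)) - 1 := by
      rw [hm, Nat.cast_sub (by omega)]
      push_cast [hn1]
      ring
    have hcY : (Fintype.card (Fin (n * (n - 1) / 2 - 1)) : ℚ) = n * (n - 1) / 2 - 1 := by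
      rw [Fintype.card_fin, hmc]
      linear_combination (-(n - 1 : ℚ) / 2) * hnq
    have hYT : (n : ℚ) * (n - 1) ≤ (∑ r : Fin n, ∑ s : Fin n,
      if r ≠ s then ((∑ c, Y r c * Y s c) + (n : ℚ) / 2) ^ 2 else 0) := by
      rw [← hT]
      refine Finset.sum_le_sum fun r _ => Finset.sum_le_sum fun s _ => ?_
      split_ifs with h
      · obtain ⟨k, hk⟩ := aux_odd (fun c => Y r c * Y s c) (by
          intro c
          rcases hY r c with h | h <;> rcases hY s c with h' | h' <;> simp [h, h'])
        have h1 : (∑ c, Y r c * Y s c) + (n : ℚ) / 2 =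
            ((2 * ((q : ℤ) * ((n : ℤ) - 1) + k + q) - 1 : ℤ) : ℚ) := by
          rw [hk, Fintype.card_fin, hmc]
          push_cast
          linear_combination (1 / 2 : ℚ) * hnq
        rw [h1]
        generalize (q : ℤ) * ((n : ℤ) - 1) + k + q = z
        have h2 : (1 : ℤ) ≤ (2 * z - 1) ^ 2 := by
          have : 0 < (2 * z - 1) ^ 2 := by
            have : 2 * z - 1 ≠ 0 := by omega
            positivity
          omega
        exact_mod_cast h2
      · exact le_refl _
    unfold Es2
    rw [hXS, hYS, hcard, hcY]
    apply div_le_div_of_nonneg_right _ hpos.le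
    linarith
end
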